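/- Let G be a group equipped with a proper left-invariant metric d, and let H and K be two subgroups of G, each of which has bounded packing in G with respect to d. Then the intersection H ∩ K has bounded packing in G with respect to d. -/

import Mathlib

/-!
A left coset `A = g(H ∩ K)` satisfies `A = gH ∩ gK = AH ∩ AK`, so the map `A ↦ (AH, AK)` from
cosets of `H ∩ K` to pairs of cosets is injective (`smul_inf_eq_mul_inter_mul`). Since `A ⊆ AH` and
`A ⊆ AK`, passing to the larger cosets does not increase distances (`cosetDist_anti`). Hence a
family of cosets of `H ∩ K` at pairwise distance at most `D` injects into a product of such families
for `H` and for `K`, and has at most `n_H * n_K` elements.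
-/

open Pointwise

/-- A proper left-invariant metric on a group `G`, given as a distance
function `d : G → G → ℝ`. -/
structure IsProperLeftInvMetric (G : Type*) [Group G] (d : G → G → ℝ) : Prop where
  self : ∀ x, d x x = 0
  eq_of_dist_eq_zero : ∀ x y, d x y = 0 → x = y
  symm : ∀ x y, d x y = d y x
  triangle : ∀ x y z, d x z ≤ d x y + d y z
  left_invariant : ∀ g x y, d (g * x) (g * y) = d x y
  proper : ∀ r : ℝ, 0 < r → {g : G | d 1 g ≤ r}.Finite

/-- The distance between two subsets of `G`: the infimum of distances between
their points. -/
noncomputable def cosetDist {G : Type*} [Group G] (d : G → G → ℝ) (A B : Set G) : ℝ :=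
  sInf {r : ℝ | ∃ x ∈ A, ∃ y ∈ B, d x y = r}

/-- A subgroup `H` has bounded packing in `G` with respect to `d` if for every
`D > 0` there is `n` such that any collection of (pairwise distinct) left cosets
of `H`, any two of which are at distance at most `D`, has at most `n` elements. -/
def HasBoundedPacking {G : Type*} [Group G] (d : G → G → ℝ) (H : Subgroup G) : Prop :=
  ∀ D : ℝ, 0 < D → ∃ n : ℕ, ∀ S : Set (Set G),
    (∀ A ∈ S, ∃ g : G, A = g • (H : Set G)) →
    (∀ A ∈ S, ∀ B ∈ S, cosetDist d A B ≤ D) →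
    ∀ T : Finset (Set G), ↑T ⊆ S → T.card ≤ n

theorem IsProperLeftInvMetric.nonneg {G : Type*} [Group G] {d : G → G → ℝ}
    (hd : IsProperLeftInvMetric G d) (x y : G) : 0 ≤ d x y := by
  have h := hd.triangle x y x
  rw [hd.self, hd.symm y x] at h
  linarith

/-- Nonemptiness of the smaller sets is needed because `sInf ∅ = 0`. -/
theorem cosetDist_anti {G : Type*} [Group G] {d : G → G → ℝ}
    (hd : IsProperLeftInvMetric G d) {A B A' B' : Set G} (hA : A.Nonempty) (hB : B.Nonempty)
    (hAA' : A ⊆ A') (hBB' : B ⊆ B') : cosetDist d A' B' ≤ cosetDist d A B := by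
  obtain ⟨a, ha⟩ := hA
  obtain ⟨b, hb⟩ := hB
  refine csInf_le_csInf ⟨0, ?_⟩ ⟨d a b, a, ha, b, hb, rfl⟩ ?_
  · rintro _ ⟨x, -, y, -, rfl⟩
    exact hd.nonneg x y
  · rintro _ ⟨x, hx, y, hy, rfl⟩
    exact ⟨x, hAA' hx, y, hBB' hy, rfl⟩

theorem smul_mul_of_le {G : Type*} [Group G] {L H : Subgroup G} (hLH : L ≤ H) (g : G) :
    (g • (L : Set G)) * (H : Set G) = g • (H : Set G) := by
  rw [smul_mul_assoc]
  congr 1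
  ext x
  constructor
  · rintro ⟨l, hl, h, hh, rfl⟩
    exact H.mul_mem (hLH hl) hh
  · intro hx
    exact ⟨1, L.one_mem, x, hx, one_mul x⟩

theorem smul_inf_eq_mul_inter_mul {G : Type*} [Group G] (H K : Subgroup G) (g : G) :
    g • ((H ⊓ K : Subgroup G) : Set G) =
      ((g • ((H ⊓ K : Subgroup G) : Set G)) * (H : Set G)) ∩
        ((g • ((H ⊓ K : Subgroup G) : Set G)) * (K : Set G)) := by
  rw [smul_mul_of_le inf_le_left, smul_mul_of_le inf_le_right, Subgroup.coe_inf,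
    Set.smul_set_inter]

/-- Bounded packing of `H` also bounds the number of `H`-cosets met by a family of pairwise close
cosets of a smaller subgroup `L`. -/
theorem card_image_mul_le {G : Type*} [Group G] [DecidableEq (Set G)] {d : G → G → ℝ}
    (hd : IsProperLeftInvMetric G d) {L H : Subgroup G} (hLH : L ≤ H) {D : ℝ} {n : ℕ}
    (hn : ∀ S : Set (Set G),
      (∀ A ∈ S, ∃ g : G, A = g • (H : Set G)) →
      (∀ A ∈ S, ∀ B ∈ S, cosetDist d A B ≤ D) →
      ∀ T : Finset (Set G), ↑T ⊆ S → T.card ≤ n)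
    (T : Finset (Set G)) (hT : ∀ A ∈ T, ∃ g : G, A = g • (L : Set G))
    (hD : ∀ A ∈ T, ∀ B ∈ T, cosetDist d A B ≤ D) :
    (T.image fun A => A * (H : Set G)).card ≤ n := by
  have hne : ∀ A ∈ T, A.Nonempty := by
    intro A hA
    obtain ⟨g, rfl⟩ := hT A hA
    exact (OneMemClass.coe_nonempty L).smul_set
  have hsub : ∀ A : Set G, A ⊆ A * (H : Set G) := fun A =>
    Set.subset_mul_left A H.one_mem
  refine hn ↑(T.image fun A => A * (H : Set G)) ?_ ?_ _ subset_rfl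
  · intro A' hA'
    obtain ⟨A, hA, rfl⟩ := Finset.mem_image.1 (Finset.mem_coe.1 hA')
    obtain ⟨g, rfl⟩ := hT A hA
    exact ⟨g, smul_mul_of_le hLH g⟩
  · intro A' hA' B' hB'
    obtain ⟨A, hA, rfl⟩ := Finset.mem_image.1 (Finset.mem_coe.1 hA')
    obtain ⟨B, hB, rfl⟩ := Finset.mem_image.1 (Finset.mem_coe.1 hB')
    exact (cosetDist_anti hd (hne A hA) (hne B hB) (hsub A) (hsub B)).trans (hD A hA B hB)

/-- The intersection of two subgroups with bounded packing has bounded packing. -/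
theorem inf_hasBoundedPacking {G : Type*} [Group G] (d : G → G → ℝ)
    (hd : IsProperLeftInvMetric G d) (H K : Subgroup G)
    (hH : HasBoundedPacking d H) (hK : HasBoundedPacking d K) :
    HasBoundedPacking d (H ⊓ K) := by
  classical
  intro D hDpos
  obtain ⟨n, hn⟩ := hH D hDpos
  obtain ⟨m, hm⟩ := hK D hDpos
  refine ⟨n * m, fun S hS hD T hTS => ?_⟩
  have hT : ∀ A ∈ T, ∃ g : G, A = g • ((H ⊓ K : Subgroup G) : Set G) :=
    fun A hA => hS A (hTS hA)
  have hTD : ∀ A ∈ T, ∀ B ∈ T, cosetDist d A B ≤ D :=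
    fun A hA B hB => hD A (hTS hA) B (hTS hB)
  have hrec : ∀ A ∈ T, A = (A * (H : Set G)) ∩ (A * (K : Set G)) := by
    intro A hA
    obtain ⟨g, rfl⟩ := hT A hA
    exact smul_inf_eq_mul_inter_mul H K g
  calc T.card
      ≤ ((T.image fun A => A * (H : Set G)) ×ˢ (T.image fun A => A * (K : Set G))).card := by
        refine Finset.card_le_card_of_injOn (fun A => (A * (H : Set G), A * (K : Set G))) ?_ ?_
        · intro A hA
          exact Finset.mem_coe.2 (Finset.mem_product.2
            ⟨Finset.mem_image_of_mem _ hA, Finset.mem_image_of_mem _ hA⟩)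
        · intro A hA B hB hAB
          obtain ⟨h₁, h₂⟩ := Prod.mk.inj hAB
          rw [hrec A hA, hrec B hB, h₁, h₂]
    _ ≤ n * m := by
        rw [Finset.card_product]
        exact Nat.mul_le_mul (card_image_mul_le hd inf_le_left hn T hT hTD)
          (card_image_mul_le hd inf_le_right hm T hT hTD)
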